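/- arXiv:2509.17515 — 2 statements merged into one kernel-verified Lean document; each statement's English description precedes it below -/
import Mathlib

section
/- Let n ≥ 1, let K be a real n×n matrix, and let I ⊆ {1,…,n} be a subset with m = |I| elements. In the exterior algebra Λ(ℝ^{2n}) with ψ_i = ι(e_i), ψ̄_i = ι(e_{n+i}) and Q = Σ_{i,j} K_{ij} ψ̄_i ∧ ψ_j, one has Q^{n−m} ∧ (∧_{i∈I} (ψ̄_i ∧ ψ_i)) = (n−m)! · det(K_{Iᶜ}) · Ω, where K_{Iᶜ} is the principal submatrix of K with rows and columns indexed by the complement of I, and Ω = ψ̄_1 ∧ ψ_1 ∧ ⋯ ∧ ψ̄_n ∧ ψ_n. -/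
open ExteriorAlgebra

/-!
Products of two vectors are central in the exterior algebra, so the identity is one about a
commutative algebra. There `Q` is the sum of the square-zero elements `∑ j, K i j • (ψ̄ i ∧ ψ j)`,
so its top power is a factorial times their product. That product is alternating in the rows of `K`,
which produces the determinant. Finally, multiplication by the product of `ψ̄ i ∧ ψ i` over `i ∈ I`
kills every term of `Q` whose row or column index lies in `I`, so `Q` may be replaced by the same
form built on `Iᶜ`.
-/

namespace GrassmannGaussian

open Finset

section Annihilation

variable {A m : Type*}

theorem mul_prod_eq_zero_of_mem [CommMonoidWithZero A] {s : Finset m} {p : m → A} {x : A} {i : m}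
    (hi : i ∈ s) (hx : x * p i = 0) : x * ∏ i ∈ s, p i = 0 := by
  classical
  rw [← mul_prod_erase s p hi, ← mul_assoc, hx, zero_mul]

theorem sum_mul_prod_eq_zero [CommSemiring A] {s : Finset m} {f p : m → A}
    (h : ∀ i ∈ s, f i * p i = 0) :
    (∑ i ∈ s, f i) * ∏ i ∈ s, p i = 0 := by
  rw [sum_mul]
  exact sum_eq_zero fun i hi => mul_prod_eq_zero_of_mem hi (h i hi)

theorem sum_pow_card_of_sq_eq_zero [CommRing A] {s : Finset m} {f : m → A}
    (hf : ∀ i ∈ s, f i ^ 2 = 0) :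
    (∑ i ∈ s, f i) ^ #s = (#s).factorial * ∏ i ∈ s, f i := by
  classical
  induction s using Finset.induction_on with
  | empty => simp
  | insert a s ha ih =>
    obtain ⟨hfa, hfs⟩ := forall_mem_insert .. |>.mp hf
    set S := ∑ i ∈ s, f i
    have hpow : S ^ #s = (#s).factorial * ∏ i ∈ s, f i := ih hfs
    have hpow_succ : S ^ (#s + 1) = 0 := by
      rw [pow_succ', hpow, mul_left_comm,
        sum_mul_prod_eq_zero fun i hi => (sq (f i)).symm.trans (hfs i hi), mul_zero]
    have hadd : (S + f a) ^ (#s + 1) = S ^ (#s + 1) + (#s + 1) * S ^ #s * f a := by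
      simpa using Polynomial.aeval_add_of_sq_eq_zero (.X ^ (#s + 1) : Polynomial A) S (f a) hfa
    rw [sum_insert ha, card_insert_of_notMem ha, prod_insert ha, add_comm, hadd, hpow_succ, hpow,
      Nat.factorial_succ]
    push_cast
    ring

theorem pow_mul_eq_pow_mul [CommMonoid A] {x y p : A} (h : x * p = y * p) (k : ℕ) :
    x ^ k * p = y ^ k * p := by
  induction k with
  | zero => simp only [pow_zero]
  | succ k ih => rw [pow_succ, mul_assoc, h, mul_left_comm, ih, pow_succ', mul_assoc]

theorem sum_sum_mul_eq_sum_compl_mul [NonUnitalNonAssocSemiring A] [Fintype m] [DecidableEq m]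
    {I : Finset m} {t : m → m → A} {p : A} (h : ∀ i j, i ∈ I ∨ j ∈ I → t i j * p = 0) :
    (∑ i, ∑ j, t i j) * p = (∑ i : ↥Iᶜ, ∑ j : ↥Iᶜ, t i j) * p := by
  have hrow (i : m) : ∑ j : ↥Iᶜ, t i j * p = ∑ j, t i j * p := by
    rw [sum_coe_sort Iᶜ fun j => t i j * p]
    exact sum_subset (subset_univ _) fun j _ hj => h i j (.inr (by simpa using hj))
  simp only [sum_mul, hrow]
  rw [sum_coe_sort Iᶜ fun i => ∑ j, t i j * p]
  exact (sum_subset (subset_univ _) fun i _ hi =>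
    sum_eq_zero fun j _ => h i j (.inl (by simpa using hi))).symm

end Annihilation

section Determinant

variable {R N m : Type*} [CommRing R] [AddCommGroup N] [Module R N] [Fintype m] [DecidableEq m]

theorem alternatingMap_sum_smul {N' : Type*} [AddCommGroup N'] [Module R N']
    (f : N [⋀^m]→ₗ[R] N') (K : Matrix m m R) (b : m → N) :
    f (fun i => ∑ j, K i j • b j) = K.det • f b := by
  have h : f.compLinearMap (Fintype.linearCombination R b) =
      (LinearMap.toSpanSingleton R N' (f b)).compAlternatingMap Matrix.detRowAlternating := by
    refine (Pi.basisFun R m).ext_alternating fun v hv => ?_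
    let σ : Equiv.Perm m := .ofBijective v (Finite.injective_iff_bijective.mp hv)
    have hσ : (fun i => Pi.basisFun R m (v i)) = Pi.basisFun R m ∘ σ := rfl
    have hdet : Matrix.detRowAlternating (Pi.basisFun R m) = (1 : R) := by
      rw [← Pi.basisFun_det, Module.Basis.det_self]
    rw [hσ, AlternatingMap.map_perm, AlternatingMap.map_perm]
    simp [hdet, Fintype.linearCombination_apply_single]
  calc f (fun i => ∑ j, K i j • b j)
    _ = f.compLinearMap (Fintype.linearCombination R b) K := rfl
    _ = K.det • f b := by rw [h]; rfl

variable {A : Type*} [CommRing A] [Algebra R A] {g : m → N →ₗ[R] A}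

/-- The product `v ↦ ∏ i, g i (v i)` of linear maps into a commutative algebra, as an alternating
map. It packages the sign rule of the exterior algebra without leaving commutative algebra. -/
def alternatingProd (g : m → N →ₗ[R] A) (hg : ∀ i j, i ≠ j → ∀ y, g i y * g j y = 0) :
    N [⋀^m]→ₗ[R] A :=
  { (MultilinearMap.mkPiAlgebra R m A).compLinearMap g with
    map_eq_zero_of_eq' := fun v i j hv hij => by
      change ∏ k, g k (v k) = 0
      rw [← mul_prod_erase _ _ (mem_univ i)]
      exact mul_prod_eq_zero_of_mem (mem_erase.mpr ⟨hij.symm, mem_univ j⟩) (hv ▸ hg i j hij _) }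

theorem prod_sum_smul_eq_det_smul_prod (hg : ∀ i j, i ≠ j → ∀ y, g i y * g j y = 0)
    (K : Matrix m m R) (b : m → N) :
    ∏ i, ∑ j, K i j • g i (b j) = K.det • ∏ i, g i (b i) := by
  have h : ∏ i, g i (∑ j, K i j • b j) = K.det • ∏ i, g i (b i) :=
    alternatingMap_sum_smul (alternatingProd g hg) K b
  simpa only [map_sum, map_smul] using h

theorem sum_pow_card_eq_det_smul_prod (hg : ∀ i j y, g i y * g j y = 0)
    (K : Matrix m m R) (b : m → N) :
    (∑ i, ∑ j, K i j • g i (b j)) ^ Fintype.card m =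
      ((Fintype.card m).factorial * K.det) • ∏ i, g i (b i) := by
  have hsq (i : m) : (∑ j, K i j • g i (b j)) ^ 2 = 0 := by
    simpa only [map_sum, map_smul, sq] using hg i i (∑ j, K i j • b j)
  rw [← card_univ, sum_pow_card_of_sq_eq_zero fun i _ => hsq i,
    prod_sum_smul_eq_det_smul_prod (fun i j _ => hg i j), mul_smul, Nat.cast_smul_eq_nsmul,
    nsmul_eq_mul]

theorem sum_pow_mul_prod_eq_det_smul_prod (hcol : ∀ i j y, g i y * g j y = 0)
    (hrow : ∀ i y z, g i y * g i z = 0) (K : Matrix m m R) (b : m → N) (I : Finset m) :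
    (∑ i, ∑ j, K i j • g i (b j)) ^ (Fintype.card m - #I) * ∏ i ∈ I, g i (b i) =
      ((Fintype.card m - #I).factorial * (K.submatrix ((↑) : ↥Iᶜ → m) (↑)).det) •
        ∏ i, g i (b i) := by
  have hkill (i j : m) (hij : i ∈ I ∨ j ∈ I) : K i j • g i (b j) * ∏ k ∈ I, g k (b k) = 0 := by
    rcases hij with hi | hj
    · exact mul_prod_eq_zero_of_mem hi (by rw [smul_mul_assoc, hrow, smul_zero])
    · exact mul_prod_eq_zero_of_mem hj (by rw [smul_mul_assoc, hcol, smul_zero])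
  have htop := sum_pow_card_eq_det_smul_prod (g := fun i : ↥Iᶜ => g i) (fun i j => hcol i j)
    (K.submatrix (↑) (↑)) fun i => b i
  rw [Fintype.card_coe, card_compl, prod_coe_sort Iᶜ fun i => g i (b i)] at htop
  rw [pow_mul_eq_pow_mul (sum_sum_mul_eq_sum_compl_mul hkill), ← prod_compl_mul_prod I,
    ← smul_mul_assoc]
  exact congrArg (· * ∏ i ∈ I, g i (b i)) htop

end Determinant

section ExteriorAlgebra

variable {R M : Type*} [CommRing R] [AddCommGroup M] [Module R M]

theorem ι_mul_ι_eq_neg (x y : M) : ι R x * ι R y = -(ι R y * ι R x) :=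
  eq_neg_of_add_eq_zero_left (ι_add_mul_swap x y)

theorem ι_mul_ι_mul_ι_self (x y : M) : ι R x * ι R y * ι R x = 0 := by
  rw [ι_mul_ι_eq_neg, neg_mul, mul_assoc, ι_sq_zero, mul_zero, neg_zero]

theorem commute_ι_mul_ι (x y : M) (z : ExteriorAlgebra R M) : Commute z (ι R x * ι R y) := by
  induction z using ExteriorAlgebra.induction with
  | algebraMap r => exact Algebra.commutes r _
  | ι v =>
    change ι R v * (ι R x * ι R y) = ι R x * ι R y * ι R v
    rw [← mul_assoc, ι_mul_ι_eq_neg v x, neg_mul, mul_assoc, ι_mul_ι_eq_neg v y, mul_neg, neg_neg,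
      mul_assoc]
  | mul z w hz hw => exact hz.mul_left hw
  | add z w hz hw => exact hz.add_left hw

/-- The exterior product of two vectors, as a bilinear map into the centre of the exterior algebra,
which unlike the full algebra is a commutative ring. -/
def centralWedge : M →ₗ[R] M →ₗ[R] Subalgebra.center R (ExteriorAlgebra R M) :=
  LinearMap.mk₂ R
    (fun x y => ⟨ι R x * ι R y, Subalgebra.mem_center_iff.mpr fun z => commute_ι_mul_ι x y z⟩)
    (fun _ _ _ => Subtype.ext (by simp [add_mul]))
    (fun _ _ _ => Subtype.ext (by simp))
    (fun _ _ _ => Subtype.ext (by simp [mul_add]))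
    (fun _ _ _ => Subtype.ext (by simp))

theorem coe_centralWedge (x y : M) :
    (centralWedge (R := R) x y : ExteriorAlgebra R M) = ι R x * ι R y := rfl

theorem centralWedge_mul_same_left (x y z : M) :
    centralWedge (R := R) x y * centralWedge x z = 0 := by
  ext
  change ι R x * ι R y * (ι R x * ι R z) = 0
  rw [← mul_assoc, ι_mul_ι_mul_ι_self, zero_mul]

theorem centralWedge_mul_same_right (x y z : M) :
    centralWedge (R := R) x z * centralWedge y z = 0 := by
  ext
  change ι R x * ι R z * (ι R y * ι R z) = 0
  rw [mul_assoc, ← mul_assoc (ι R z), ι_mul_ι_mul_ι_self, mul_zero]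

theorem pairwise_commute_ι_mul_ι {m : Type*} (a b : m → M) (s : Set m) :
    s.Pairwise (Function.onFun Commute fun i => ι R (a i) * ι R (b i)) :=
  fun _ _ _ _ _ => commute_ι_mul_ι _ _ _

theorem coe_prod_centralWedge {m : Type*} (a b : m → M) (s : Finset m) :
    (↑(∏ i ∈ s, centralWedge (R := R) (a i) (b i)) : ExteriorAlgebra R M) =
      s.noncommProd (fun i => ι R (a i) * ι R (b i)) (pairwise_commute_ι_mul_ι a b s) := by
  rw [← noncommProd_eq_prod]
  exact map_noncommProd s _ _ (Subalgebra.center R (ExteriorAlgebra R M)).val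

end ExteriorAlgebra

theorem noncommProd_eq_prod_map_filter_finRange {A : Type*} [Monoid A] {n : ℕ}
    (s : Finset (Fin n)) (f : Fin n → A)
    (comm : (s : Set (Fin n)).Pairwise (Function.onFun Commute f)) :
    s.noncommProd f comm = (((List.finRange n).filter fun i => decide (i ∈ s)).map f).prod := by
  have hs : s = ((List.finRange n).filter fun i => decide (i ∈ s)).toFinset := by ext; simp
  rw [← noncommProd_toFinset _ f (hs ▸ comm) ((List.nodup_finRange n).filter _)]
  exact noncommProd_congr hs (fun _ _ => rfl) comm

end GrassmannGaussian

open GrassmannGaussian in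
theorem grassmann_gaussian_power_with_insertions_general {R M m : Type*} [CommRing R]
    [AddCommGroup M] [Module R M] [Fintype m] [DecidableEq m] (a b : m → M) (K : Matrix m m R)
    (I : Finset m) :
    (∑ i, ∑ j, K i j • (ι R (a i) * ι R (b j))) ^ (Fintype.card m - I.card) *
        I.noncommProd (fun i => ι R (a i) * ι R (b i)) (pairwise_commute_ι_mul_ι a b I) =
      ((Fintype.card m - I.card).factorial * (K.submatrix ((↑) : ↥Iᶜ → m) (↑)).det) •
        Finset.univ.noncommProd (fun i => ι R (a i) * ι R (b i))
          (pairwise_commute_ι_mul_ι a b _) := by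
  have h := sum_pow_mul_prod_eq_det_smul_prod (g := fun i => centralWedge (a i))
    (fun i j => centralWedge_mul_same_right (a i) (a j))
    (fun i => centralWedge_mul_same_left (a i)) K b I
  simpa [coe_centralWedge, coe_prod_centralWedge] using
    congrArg (Subalgebra.center R (ExteriorAlgebra R M)).val h

theorem grassmann_gaussian_power_with_insertions (n : ℕ) (hn : 1 ≤ n)
    (K : Matrix (Fin n) (Fin n) ℝ) (I : Finset (Fin n)) :
    let ψ : Fin n → ExteriorAlgebra ℝ (Fin (2 * n) → ℝ) :=
      fun i => ι ℝ (Pi.single (⟨i.val, by have := i.2; omega⟩ : Fin (2 * n)) (1 : ℝ))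
    let ψbar : Fin n → ExteriorAlgebra ℝ (Fin (2 * n) → ℝ) :=
      fun i => ι ℝ (Pi.single (⟨n + i.val, by have := i.2; omega⟩ : Fin (2 * n)) (1 : ℝ))
    let Q : ExteriorAlgebra ℝ (Fin (2 * n) → ℝ) :=
      ∑ i : Fin n, ∑ j : Fin n, K i j • (ψbar i * ψ j)
    let Ω : ExteriorAlgebra ℝ (Fin (2 * n) → ℝ) :=
      ((List.finRange n).map fun i => ψbar i * ψ i).prod
    -- the product ∧_{i ∈ I} (ψ̄_i ∧ ψ_i), taken in increasing order of i
    let prodI : ExteriorAlgebra ℝ (Fin (2 * n) → ℝ) :=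
      (((List.finRange n).filter fun i => decide (i ∈ I)).map fun i => ψbar i * ψ i).prod
    -- the principal submatrix K_{Iᶜ} on the complement of I
    let KIc : Matrix ↥(Iᶜ) ↥(Iᶜ) ℝ :=
      K.submatrix (fun x : ↥(Iᶜ) => (x : Fin n)) fun x : ↥(Iᶜ) => (x : Fin n)
    Q ^ (n - I.card) * prodI = (((n - I.card).factorial : ℝ) * KIc.det) • Ω := by
  simpa [GrassmannGaussian.noncommProd_eq_prod_map_filter_finRange] using
    grassmann_gaussian_power_with_insertions_general _ _ K I
end

section
/- Let n ≥ 1 and let K be a real n×n matrix. In the exterior algebra Λ(ℝ^{2n}) with ψ_i = ι(e_i), ψ̄_i = ι(e_{n+i}) and Q = Σ_{i,j} K_{ij} ψ̄_i ∧ ψ_j, for any indices i, j ∈ {1,…,n} one has the fermionic Wick pair-correlation identity Q^{n−1} ∧ ψ̄_i ∧ ψ_j = (n−1)! · adj(K)_{j i} · Ω, where adj(K) is the adjugate (transposed cofactor) matrix of K and Ω = ψ̄_1 ∧ ψ_1 ∧ ⋯ ∧ ψ̄_n ∧ ψ_n. -/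
open ExteriorAlgebra

/-!
Each bivector `u ∧ v` is central in the exterior algebra, so the computation takes place in a
commutative ring. There `Q = ∑ a, q a`, where `q a = ψbar a ∧ ∑ b, K a b • ψ b` squares to zero and
`q i` is annihilated by `ψbar i ∧ ψ j`. Hence `Q ^ (n - 1) ∧ ψbar i ∧ ψ j` is `(n - 1)!` times the
product of the `q a` in which `q i` has been replaced by `ψbar i ∧ ψ j`. Such a product is
alternating in the rows of the coefficient matrix, so it is `Ω` times the determinant of `K` with
row `i` replaced by the `j`-th basis vector, and this determinant is `K.adjugate j i`.
-/

section CommSemiring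

variable {A κ : Type*} [CommSemiring A]

theorem add_pow_mul_of_mul_eq_zero {x z : A} (y : A) (h : x * z = 0) (m : ℕ) :
    (x + y) ^ m * z = y ^ m * z := by
  induction m with
  | zero => simp only [pow_zero]
  | succ m ih =>
    calc (x + y) ^ (m + 1) * z = (x + y) ^ m * (x * z) + y * ((x + y) ^ m * z) := by ring
      _ = y ^ (m + 1) * z := by rw [h, ih]; ring

theorem prod_mul_sum_eq_zero_of_sq_eq_zero {s : Finset κ} {x : κ → A} (hx : ∀ a ∈ s, x a ^ 2 = 0) :
    (∏ a ∈ s, x a) * ∑ a ∈ s, x a = 0 := by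
  classical
  rw [Finset.mul_sum]
  refine Finset.sum_eq_zero fun a ha => ?_
  rw [← Finset.prod_erase_mul s x ha, mul_assoc, ← sq, hx a ha, mul_zero]

open scoped Nat in
theorem sum_pow_card_of_sq_eq_zero {s : Finset κ} {x : κ → A} (hx : ∀ a ∈ s, x a ^ 2 = 0) :
    (∑ a ∈ s, x a) ^ s.card = (s.card)! * ∏ a ∈ s, x a := by
  classical
  induction s using Finset.induction_on with
  | empty => simp
  | insert a s ha ih =>
    have hs : ∀ b ∈ s, x b ^ 2 = 0 := fun b hb => hx b (Finset.mem_insert_of_mem hb)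
    have hpow : (∑ b ∈ s, x b) ^ (s.card + 1) = 0 := by
      rw [pow_succ, ih hs, mul_assoc, prod_mul_sum_eq_zero_of_sq_eq_zero hs, mul_zero]
    obtain ⟨k, hk⟩ := Polynomial.powAddExpansion (∑ b ∈ s, x b) (x a) (s.card + 1)
    rw [Finset.sum_insert ha, Finset.prod_insert ha, Finset.card_insert_of_notMem ha, add_comm,
      hk, hpow, hx a (Finset.mem_insert_self a s), Nat.add_sub_cancel, ih hs, Nat.factorial_succ]
    push_cast
    ring

end CommSemiring

section Determinant

variable {R A M N κ : Type*} [CommRing R] [CommRing A] [Algebra R A] [AddCommGroup M] [Module R M]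
  [AddCommGroup N] [Module R N] [Fintype κ] [DecidableEq κ]

theorem alternatingMap_apply_eq_basis_det_smul (e : Module.Basis κ R M) (f : M [⋀^κ]→ₗ[R] N)
    (v : κ → M) : f v = e.det v • f e := by
  suffices f = (LinearMap.toSpanSingleton R N (f e)).compAlternatingMap e.det from
    congrArg (· v) this
  refine Module.Basis.ext_alternating e fun w hw => ?_
  let σ : Equiv.Perm κ := Equiv.ofBijective w (Finite.injective_iff_bijective.1 hw)
  change f (e ∘ σ) = (LinearMap.toSpanSingleton R N (f e)).compAlternatingMap e.det (e ∘ σ)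
  simp only [AlternatingMap.map_perm, LinearMap.compAlternatingMap_apply, e.det_self,
    LinearMap.toSpanSingleton_apply, one_smul]

theorem prod_apply_row_eq_det_smul (p : κ → (κ → R) →ₗ[R] A)
    (hp : Pairwise fun a b => ∀ v, p a v * p b v = 0) (K : Matrix κ κ R) :
    ∏ a, p a (K.row a) = K.det • ∏ a, p a (Pi.single a 1) := by
  let rowProd : (κ → R) [⋀^κ]→ₗ[R] A :=
    { (MultilinearMap.mkPiAlgebra R κ A).compLinearMap p with
      map_eq_zero_of_eq' := fun v a b hv hab => by
        change ∏ c, p c (v c) = 0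
        rw [← Finset.mul_prod_erase _ _ (Finset.mem_univ a),
          ← Finset.mul_prod_erase _ _ (Finset.mem_erase.2 ⟨hab.symm, Finset.mem_univ b⟩),
          ← mul_assoc, hv, hp hab, zero_mul] }
  have hrowProd (v : κ → κ → R) : rowProd v = ∏ a, p a (v a) := rfl
  calc ∏ a, p a (K.row a) = (Pi.basisFun R κ).det K • rowProd (Pi.basisFun R κ) :=
        alternatingMap_apply_eq_basis_det_smul (Pi.basisFun R κ) rowProd K
    _ = K.det • ∏ a, p a (Pi.single a 1) := by
        simp only [hrowProd, Pi.basisFun_apply]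
        exact congrArg (· • _) (Pi.basisFun_det_apply K)

open scoped Nat in
theorem sum_apply_row_pow_mul_eq_adjugate_smul (p : κ → (κ → R) →ₗ[R] A)
    (hcol : Pairwise fun a b => ∀ v, p a v * p b v = 0) (hrow : ∀ a v w, p a v * p a w = 0)
    (K : Matrix κ κ R) (i j : κ) :
    (∑ a, p a (K.row a)) ^ (Fintype.card κ - 1) * p i (Pi.single j 1)
      = ((Fintype.card κ - 1)! * K.adjugate j i : R) • ∏ a, p a (Pi.single a 1) := by
  have hcard : (Finset.univ.erase i).card = Fintype.card κ - 1 :=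
    Finset.card_erase_of_mem (Finset.mem_univ i)
  have hpow : (∑ a ∈ Finset.univ.erase i, p a (K.row a)) ^ (Fintype.card κ - 1)
      = (Fintype.card κ - 1)! * ∏ a ∈ Finset.univ.erase i, p a (K.row a) := by
    rw [← hcard]
    exact sum_pow_card_of_sq_eq_zero fun a _ => by rw [sq, hrow]
  have hreplace : (∏ a ∈ Finset.univ.erase i, p a (K.row a)) * p i (Pi.single j 1)
      = ∏ a, p a ((K.updateRow i (Pi.single j 1)).row a) := by
    rw [← Finset.prod_erase_mul _ _ (Finset.mem_univ i), Matrix.row_apply' _ i,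
      Matrix.updateRow_self]
    congr 1
    refine Finset.prod_congr rfl fun a ha => ?_
    rw [Matrix.row_apply', Matrix.row_apply', Matrix.updateRow_ne (Finset.ne_of_mem_erase ha)]
  calc (∑ a, p a (K.row a)) ^ (Fintype.card κ - 1) * p i (Pi.single j 1)
      = (∑ a ∈ Finset.univ.erase i, p a (K.row a)) ^ (Fintype.card κ - 1)
          * p i (Pi.single j 1) := by
        rw [← Finset.add_sum_erase _ _ (Finset.mem_univ i),
          add_pow_mul_of_mul_eq_zero _ (hrow i _ _)]
    _ = (Fintype.card κ - 1)! * ∏ a, p a ((K.updateRow i (Pi.single j 1)).row a) := by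
        rw [hpow, mul_assoc, hreplace]
    _ = (Fintype.card κ - 1)! * (K.adjugate j i • ∏ a, p a (Pi.single a 1)) := by
        rw [prod_apply_row_eq_det_smul p hcol, Matrix.adjugate_apply]
    _ = ((Fintype.card κ - 1)! * K.adjugate j i : R) • ∏ a, p a (Pi.single a 1) := by
        rw [mul_smul, ← nsmul_eq_mul, Nat.cast_smul_eq_nsmul]

end Determinant

section Bivector

variable {R M : Type*} [CommRing R] [AddCommGroup M] [Module R M]

theorem ι_mul_ι_eq_neg_swap (u v : M) : ι R u * ι R v = -(ι R v * ι R u) :=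
  eq_neg_of_add_eq_zero_left (ι_add_mul_swap u v)

theorem commute_ι_mul_ι_ι (u v w : M) : Commute (ι R u * ι R v) (ι R w) := by
  rw [commute_iff_eq, mul_assoc, ι_mul_ι_eq_neg_swap v w, mul_neg, ← mul_assoc,
    ι_mul_ι_eq_neg_swap u w, neg_mul, neg_neg, mul_assoc]

theorem commute_ι_mul_ι (u v : M) (x : ExteriorAlgebra R M) : Commute (ι R u * ι R v) x := by
  induction x using ExteriorAlgebra.induction with
  | algebraMap r => exact Algebra.commute_algebraMap_right r _
  | ι w => exact commute_ι_mul_ι_ι u v w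
  | mul x y hx hy => exact hx.mul_right hy
  | add x y hx hy => exact hx.add_right hy

theorem ι_mul_ι_mem_center (u v : M) :
    ι R u * ι R v ∈ Subalgebra.center R (ExteriorAlgebra R M) :=
  Subalgebra.mem_center_iff.2 fun x => (commute_ι_mul_ι u v x).symm

/-- The bivector `u ∧ v`, linear in `v`, as an element of the center of the exterior algebra. The
codomain is the center, rather than the whole exterior algebra, because it is commutative. -/
def bivector (u : M) : M →ₗ[R] Subalgebra.center R (ExteriorAlgebra R M) :=
  LinearMap.codRestrict (Subalgebra.toSubmodule (Subalgebra.center R (ExteriorAlgebra R M)))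
    (LinearMap.mulLeft R (ι R u) ∘ₗ ι R)
    (ι_mul_ι_mem_center u)

theorem coe_bivector (u v : M) : (bivector (R := R) u v : ExteriorAlgebra R M) = ι R u * ι R v :=
  rfl

theorem bivector_mul_bivector_same_left (u v w : M) :
    bivector (R := R) u v * bivector u w = 0 := by
  refine Subtype.ext ?_
  change ι R u * ι R v * (ι R u * ι R w) = 0
  rw [← mul_assoc, (commute_ι_mul_ι_ι u v u).eq, ← mul_assoc, ι_sq_zero, zero_mul, zero_mul]

theorem bivector_mul_bivector_same_right (u v w : M) :
    bivector (R := R) u w * bivector v w = 0 := by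
  refine Subtype.ext ?_
  change ι R u * ι R w * (ι R v * ι R w) = 0
  rw [← mul_assoc, (commute_ι_mul_ι_ι u w v).eq, mul_assoc, mul_assoc, ι_sq_zero, mul_zero,
    mul_zero]

open scoped Nat in
theorem grassmann_wick_pair_correlation_general {κ : Type*} [Fintype κ] [DecidableEq κ]
    (ψbar ψ : κ → M) (K : Matrix κ κ R) (i j : κ) :
    (∑ a, ∑ b, K a b • (ι R (ψbar a) * ι R (ψ b))) ^ (Fintype.card κ - 1) * ι R (ψbar i) * ι R (ψ j)
      = ((Fintype.card κ - 1)! * K.adjugate j i : R) •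
        Finset.univ.noncommProd (fun a => ι R (ψbar a) * ι R (ψ a))
          fun _ _ _ _ _ => commute_ι_mul_ι _ _ _ := by
  let p (a : κ) : (κ → R) →ₗ[R] Subalgebra.center R (ExteriorAlgebra R M) :=
    bivector (ψbar a) ∘ₗ Fintype.linearCombination R ψ
  have hcol : Pairwise fun a b => ∀ v, p a v * p b v = 0 :=
    fun _ _ _ _ => bivector_mul_bivector_same_right _ _ _
  have hrow (a : κ) (v w : κ → R) : p a v * p a w = 0 := bivector_mul_bivector_same_left _ _ _
  have hp_row (a : κ) :
      (p a (K.row a) : ExteriorAlgebra R M) = ∑ b, K a b • (ι R (ψbar a) * ι R (ψ b)) := by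
    rw [LinearMap.comp_apply, coe_bivector, Fintype.linearCombination_apply, map_sum,
      Finset.mul_sum]
    simp only [map_smul, mul_smul_comm, Matrix.row_apply]
  have hp_single (a b : κ) :
      (p a (Pi.single b 1) : ExteriorAlgebra R M) = ι R (ψbar a) * ι R (ψ b) := by
    rw [LinearMap.comp_apply, coe_bivector, Fintype.linearCombination_apply_single, one_smul]
  have hprod : ((∏ a, p a (Pi.single a 1) : Subalgebra.center R (ExteriorAlgebra R M)) :
      ExteriorAlgebra R M) = Finset.univ.noncommProd (fun a => ι R (ψbar a) * ι R (ψ a))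
        fun _ _ _ _ _ => commute_ι_mul_ι _ _ _ := by
    simp only [← hp_single]
    rw [← Finset.noncommProd_eq_prod]
    exact Finset.map_noncommProd _ _ _ (Subalgebra.center R (ExteriorAlgebra R M)).val
  have hwick := congrArg (Subalgebra.center R (ExteriorAlgebra R M)).val
    (sum_apply_row_pow_mul_eq_adjugate_smul p hcol hrow K i j)
  simpa only [map_mul, map_pow, map_sum, map_smul, Subalgebra.coe_val, hp_row, hp_single, hprod,
    ← mul_assoc] using hwick

end Bivector

theorem grassmann_wick_pair_correlation (n : ℕ) (hn : 1 ≤ n)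
    (K : Matrix (Fin n) (Fin n) ℝ) (i j : Fin n) :
    let ψ : Fin n → ExteriorAlgebra ℝ (Fin (2 * n) → ℝ) :=
      fun a => ι ℝ (Pi.single (⟨a.val, by have := a.2; omega⟩ : Fin (2 * n)) (1 : ℝ))
    let ψbar : Fin n → ExteriorAlgebra ℝ (Fin (2 * n) → ℝ) :=
      fun a => ι ℝ (Pi.single (⟨n + a.val, by have := a.2; omega⟩ : Fin (2 * n)) (1 : ℝ))
    let Q : ExteriorAlgebra ℝ (Fin (2 * n) → ℝ) :=
      ∑ a : Fin n, ∑ b : Fin n, K a b • (ψbar a * ψ b)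
    let Ω : ExteriorAlgebra ℝ (Fin (2 * n) → ℝ) :=
      ((List.finRange n).map fun a => ψbar a * ψ a).prod
    Q ^ (n - 1) * ψbar i * ψ j
      = (((n - 1).factorial : ℝ) * K.adjugate j i) • Ω := by
  simpa only [Fintype.card_fin, ← List.toFinset_finRange,
    Finset.noncommProd_toFinset _ _ _ (List.nodup_finRange n)] using
      grassmann_wick_pair_correlation_general _ _ K i j
end
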